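/- The partial information decomposition identity holds: Un(X→Z|Y) + Un(Y→Z|X) + Red(X,Y→Z) + Syn(X,Y→Z) = I(X,Y;Z), where I(X,Y;Z) is the mutual information between the pair (X,Y) and Z under the joint distribution p. -/

import Mathlib

open Finset

/-- Shannon entropy of a distribution on a finite type (natural-log base). -/
noncomputable def ent {α : Type*} [Fintype α] (p : α → ℝ) : ℝ :=
  ∑ a, Real.negMulLog (p a)

/-- Mutual information between the two coordinates of a joint distribution. -/
noncomputable def mutInfo {α β : Type*} [Fintype α] [Fintype β] (q : α × β → ℝ) : ℝ :=
  ent (fun a => ∑ b, q (a, b)) + ent (fun b => ∑ a, q (a, b)) - ent q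

/-- Conditional entropy of the first coordinate given the second: H(A|B) = H(A,B) - H(B). -/
noncomputable def condEntFst {α β : Type*} [Fintype α] [Fintype β] (q : α × β → ℝ) : ℝ :=
  ent q - ent (fun b => ∑ a, q (a, b))

/-- Conditional entropy of the second coordinate given the first: H(B|A) = H(A,B) - H(A). -/
noncomputable def condEntSnd {α β : Type*} [Fintype α] [Fintype β] (q : α × β → ℝ) : ℝ :=
  ent q - ent (fun a => ∑ b, q (a, b))

section PID

variable {X Y Z : Type*} [Fintype X] [Fintype Y] [Fintype Z]

/-- 𝒳-marginal of a joint distribution on 𝒳×𝒴×𝒵. -/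
noncomputable def pX (p : X × Y × Z → ℝ) (x : X) : ℝ := ∑ y, ∑ z, p (x, y, z)

/-- 𝒴-marginal. -/
noncomputable def pY (p : X × Y × Z → ℝ) (y : Y) : ℝ := ∑ x, ∑ z, p (x, y, z)

/-- 𝒵-marginal. -/
noncomputable def pZ (p : X × Y × Z → ℝ) (z : Z) : ℝ := ∑ x, ∑ y, p (x, y, z)

/-- The do-operation: q(x,y,z) = p(x,y,z)·c(z)/p_Z(z) if p_Z(z) > 0, else 0. -/
noncomputable def doOp (p : X × Y × Z → ℝ) (c : Z → ℝ) : X × Y × Z → ℝ :=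
  fun t => if 0 < pZ p t.2.2 then p t * c t.2.2 / pZ p t.2.2 else 0

/-- (𝒳,𝒵)-marginal. -/
noncomputable def margXZ (p : X × Y × Z → ℝ) : X × Z → ℝ := fun t => ∑ y, p (t.1, y, t.2)

/-- (𝒴,𝒵)-marginal. -/
noncomputable def margYZ (p : X × Y × Z → ℝ) : Y × Z → ℝ := fun t => ∑ x, p (x, t.1, t.2)

/-- (𝒳,𝒴)-marginal. -/
noncomputable def margXY (p : X × Y × Z → ℝ) : X × Y → ℝ := fun t => ∑ z, p (t.1, t.2, z)

/-- c_y(z) = Pr(Z = z | Y = y). -/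
noncomputable def cy (p : X × Y × Z → ℝ) (y : Y) : Z → ℝ :=
  fun z => (∑ x, p (x, y, z)) / pY p y

/-- The distribution of (A_y, B_y, C_y) = do(p | c_y). -/
noncomputable def doy (p : X × Y × Z → ℝ) (y : Y) : X × Y × Z → ℝ := doOp p (cy p y)

/-- c^x(z) = Pr(Z = z | X = x). -/
noncomputable def cx (p : X × Y × Z → ℝ) (x : X) : Z → ℝ :=
  fun z => (∑ y, p (x, y, z)) / pX p x

/-- The distribution of (A^x, B^x, C^x) = do(p | c^x). -/
noncomputable def dox (p : X × Y × Z → ℝ) (x : X) : X × Y × Z → ℝ := doOp p (cx p x)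

/-- Unique information Un(X→Z|Y) = Σ_{y : p_Y(y)>0} p_Y(y)·I(A_y;C_y). -/
noncomputable def Un (p : X × Y × Z → ℝ) : ℝ :=
  ∑ y ∈ Finset.univ.filter (fun y => 0 < pY p y), pY p y * mutInfo (margXZ (doy p y))

/-- Unique information Un(Y→Z|X) = Σ_{x : p_X(x)>0} p_X(x)·I(B^x;C^x). -/
noncomputable def UnYX (p : X × Y × Z → ℝ) : ℝ :=
  ∑ x ∈ Finset.univ.filter (fun x => 0 < pX p x), pX p x * mutInfo (margYZ (dox p x))

/-- Redundant information Red(X,Y→Z) = I(X;Z) − Un(X→Z|Y). -/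
noncomputable def Red (p : X × Y × Z → ℝ) : ℝ := mutInfo (margXZ p) - Un p

/-- Conditional mutual information I(X;Z|Y) = H(X,Y) + H(Y,Z) − H(Y) − H(X,Y,Z). -/
noncomputable def condMI (p : X × Y × Z → ℝ) : ℝ :=
  ent (margXY p) + ent (margYZ p) - ent (pY p) - ent p

/-- Synergistic information Syn(X,Y→Z) = I(X;Z|Y) − Un(X→Z|Y). -/
noncomputable def Syn (p : X × Y × Z → ℝ) : ℝ := condMI p - Un p

end PID

/-!
The coupling `r(x,y,z) = p(x,z) p(y,z) / p(z)`, under which `X` and `Y` are conditionally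
independent given `Z`, has the same `(X,Z)`- and `(Y,Z)`-marginals as `p`, and its slices at fixed
`y`, divided by `p(y)`, are the laws of `(A_y, C_y)`. Hence `Un(X→Z|Y)` is the conditional mutual
information `I(X;Z|Y)` of `r`, and likewise `Un(Y→Z|X)` with `X` and `Y` exchanged. Expanding
`I(X,Y;Z)` under `r` by the chain rule in both orders gives
`I(Y;Z) + Un(X→Z|Y) = I(X;Z) + Un(Y→Z|X)`, that is, `Red` is symmetric in `X` and `Y`. The four
terms therefore add up to `I(Y;Z) + I(X;Z|Y)`, and the chain rule under `p` finishes the proof.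
-/

section Entropy

variable {α β γ : Type*} [Fintype α] [Fintype β] [Fintype γ]

lemma ent_comp_equiv (e : α ≃ β) (q : β → ℝ) : ent (fun a => q (e a)) = ent q :=
  e.sum_comp fun b => Real.negMulLog (q b)

lemma ent_const_mul (s : ℝ) (q : α → ℝ) :
    ent (fun a => s * q a) = s * ent q + (∑ a, q a) * Real.negMulLog s := by
  simp only [ent, Real.negMulLog_mul, sum_add_distrib, mul_sum, sum_mul, add_comm]

lemma mutInfo_comp_equiv_fst (e : γ ≃ α) (q : α × β → ℝ) :
    mutInfo (fun t : γ × β => q (e t.1, t.2)) = mutInfo q := by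
  have h_fst := ent_comp_equiv e fun a => ∑ b, q (a, b)
  have h_snd (b : β) : ∑ c, q (e c, b) = ∑ a, q (a, b) := e.sum_comp fun a => q (a, b)
  have h_joint : ent (fun t : γ × β => q (e t.1, t.2)) = ent q :=
    ent_comp_equiv (e.prodCongr (Equiv.refl β)) q
  simp only [mutInfo, h_fst, h_snd, h_joint]

lemma mutInfo_const_mul (s : ℝ) (q : α × β → ℝ) :
    mutInfo (fun t => s * q t) = s * mutInfo q + (∑ t, q t) * Real.negMulLog s := by
  have h_fst : ∑ a, ∑ b, q (a, b) = ∑ t, q t := (Fintype.sum_prod_type q).symm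
  have h_snd : ∑ b, ∑ a, q (a, b) = ∑ t, q t := (Fintype.sum_prod_type_right q).symm
  simp only [mutInfo, ← mul_sum, ent_const_mul, h_fst, h_snd]
  ring

end Entropy

section Marginals

variable {X Y Z : Type*} {p : X × Y × Z → ℝ}

lemma sum_margYZ_eq_pY [Fintype X] [Fintype Z] (p : X × Y × Z → ℝ) (y : Y) :
    ∑ z, margYZ p (y, z) = pY p y :=
  sum_comm

lemma sum_margYZ_eq_pZ [Fintype X] [Fintype Y] (p : X × Y × Z → ℝ) (z : Z) :
    ∑ y, margYZ p (y, z) = pZ p z :=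
  sum_comm

lemma margYZ_nonneg [Fintype X] (hp : ∀ t, 0 ≤ p t) (t : Y × Z) : 0 ≤ margYZ p t :=
  sum_nonneg fun _ _ => hp _

lemma pY_nonneg [Fintype X] [Fintype Z] (hp : ∀ t, 0 ≤ p t) (y : Y) : 0 ≤ pY p y :=
  sum_nonneg fun _ _ => sum_nonneg fun _ _ => hp _

lemma pZ_nonneg [Fintype X] [Fintype Y] (hp : ∀ t, 0 ≤ p t) (z : Z) : 0 ≤ pZ p z :=
  sum_nonneg fun _ _ => sum_nonneg fun _ _ => hp _

lemma margYZ_eq_zero_of_pZ_eq_zero [Fintype X] [Fintype Y] (hp : ∀ t, 0 ≤ p t) {z : Z}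
    (hz : pZ p z = 0) (y : Y) :
    margYZ p (y, z) = 0 := by
  rw [← sum_margYZ_eq_pZ, sum_eq_zero_iff_of_nonneg fun y _ => margYZ_nonneg hp (y, z)] at hz
  exact hz y (mem_univ y)

lemma eq_zero_of_pY_eq_zero [Fintype X] [Fintype Z] (hp : ∀ t, 0 ≤ p t) {y : Y}
    (hy : pY p y = 0) (x : X) (z : Z) :
    p (x, y, z) = 0 := by
  have hx : ∑ z, p (x, y, z) = 0 :=
    (sum_eq_zero_iff_of_nonneg fun x _ => sum_nonneg fun z _ => hp (x, y, z)).mp hy x (mem_univ x)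
  exact (sum_eq_zero_iff_of_nonneg fun z _ => hp (x, y, z)).mp hx z (mem_univ z)

end Marginals

section ChainRule

variable {X Y Z : Type*} [Fintype X] [Fintype Z] {p : X × Y × Z → ℝ}

lemma pY_mul_mutInfo_slice_div (hp : ∀ t, 0 ≤ p t) (y : Y) :
    pY p y * mutInfo (fun t : X × Z => p (t.1, y, t.2) / pY p y) =
      mutInfo (fun t : X × Z => p (t.1, y, t.2)) - Real.negMulLog (pY p y) := by
  have h_slice : (fun t : X × Z => p (t.1, y, t.2)) =
      fun t => pY p y * (p (t.1, y, t.2) / pY p y) :=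
    funext fun t => (mul_div_cancel_of_imp' fun hy => eq_zero_of_pY_eq_zero hp hy t.1 t.2).symm
  have h_mass : (∑ t : X × Z, p (t.1, y, t.2) / pY p y) * Real.negMulLog (pY p y) =
      Real.negMulLog (pY p y) := by
    rw [← sum_div, Fintype.sum_prod_type, ← pY]
    obtain hy | hy := eq_or_ne (pY p y) 0
    · rw [hy, Real.negMulLog_zero, mul_zero]
    · rw [div_self hy, one_mul]
  rw [h_slice, mutInfo_const_mul, h_mass]
  ring

variable [Fintype Y]

theorem mutInfo_pair_eq_add_condMI (p : X × Y × Z → ℝ) :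
    mutInfo (fun t : (X × Y) × Z => p (t.1.1, t.1.2, t.2)) = mutInfo (margYZ p) + condMI p := by
  have h_joint : ent (fun t : (X × Y) × Z => p (t.1.1, t.1.2, t.2)) = ent p :=
    ent_comp_equiv (Equiv.prodAssoc X Y Z) p
  have h_pair : ent (fun a : X × Y => ∑ z, p (a.1, a.2, z)) = ent (margXY p) := rfl
  have h_pZ : ent (fun z => ∑ a : X × Y, p (a.1, a.2, z)) = ent (pZ p) := by
    simp only [Fintype.sum_prod_type]
    rfl
  have h_YZ : mutInfo (margYZ p) = ent (pY p) + ent (pZ p) - ent (margYZ p) := by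
    simp only [mutInfo, sum_margYZ_eq_pY, sum_margYZ_eq_pZ]
  rw [h_YZ, mutInfo, h_joint, h_pair, h_pZ, condMI]
  ring

lemma condMI_eq_sum_mutInfo_slice (p : X × Y × Z → ℝ) :
    condMI p = ∑ y, (mutInfo (fun t : X × Z => p (t.1, y, t.2)) - Real.negMulLog (pY p y)) := by
  have h_XY : ent (margXY p) = ∑ y, ent fun x => ∑ z, p (x, y, z) :=
    Fintype.sum_prod_type_right _
  have h_YZ : ent (margYZ p) = ∑ y, ent fun z => ∑ x, p (x, y, z) :=
    Fintype.sum_prod_type _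
  have h_joint : ent p = ∑ y, ent fun t : X × Z => p (t.1, y, t.2) := by
    simp only [ent, Fintype.sum_prod_type]
    exact sum_comm
  have h_Y : ent (pY p) = ∑ y, Real.negMulLog (pY p y) := rfl
  rw [condMI, h_XY, h_YZ, h_joint, h_Y]
  simp only [mutInfo, sum_sub_distrib, sum_add_distrib]
  ring

theorem condMI_eq_sum_pY_mul_mutInfo (hp : ∀ t, 0 ≤ p t) :
    condMI p = ∑ y with 0 < pY p y,
      pY p y * mutInfo (fun t : X × Z => p (t.1, y, t.2) / pY p y) := by
  rw [sum_filter_of_ne fun y _ hy => (pY_nonneg hp y).lt_of_ne' (left_ne_zero_of_mul hy),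
    condMI_eq_sum_mutInfo_slice]
  simp only [pY_mul_mutInfo_slice_div hp]

end ChainRule

section Swap

variable {X Y Z : Type*}

/-- The joint distribution of `(Y, X, Z)` when `p` is that of `(X, Y, Z)`; it transfers statements
about `X → Z` given `Y` to statements about `Y → Z` given `X`. -/
def swapXY (p : X × Y × Z → ℝ) : Y × X × Z → ℝ := fun t => p (t.2.1, t.1, t.2.2)

lemma swapXY_nonneg {p : X × Y × Z → ℝ} (hp : ∀ t, 0 ≤ p t) (t : Y × X × Z) : 0 ≤ swapXY p t :=
  hp _

lemma margXZ_swapXY [Fintype X] (p : X × Y × Z → ℝ) : margXZ (swapXY p) = margYZ p := rfl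

lemma margYZ_swapXY [Fintype Y] (p : X × Y × Z → ℝ) : margYZ (swapXY p) = margXZ p := rfl

variable [Fintype X] [Fintype Y]

lemma pZ_swapXY (p : X × Y × Z → ℝ) : pZ (swapXY p) = pZ p :=
  funext fun _ => sum_comm

lemma doOp_swapXY (p : X × Y × Z → ℝ) (c : Z → ℝ) : doOp (swapXY p) c = swapXY (doOp p c) := by
  funext t
  simp only [doOp, pZ_swapXY, swapXY]

variable [Fintype Z]

lemma un_swapXY (p : X × Y × Z → ℝ) : Un (swapXY p) = UnYX p := by
  have h_do (x : X) : margXZ (doy (swapXY p) x) = margYZ (dox p x) := by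
    rw [doy, doOp_swapXY, margXZ_swapXY]
    rfl
  simp only [Un, h_do]
  rfl

theorem mutInfo_margYZ_add_condMI_comm (p : X × Y × Z → ℝ) :
    mutInfo (margYZ p) + condMI p = mutInfo (margXZ p) + condMI (swapXY p) := by
  rw [← mutInfo_pair_eq_add_condMI, ← margYZ_swapXY, ← mutInfo_pair_eq_add_condMI]
  exact (mutInfo_comp_equiv_fst (Equiv.prodComm Y X) _).symm

end Swap

section MarkovCoupling

variable {X Y Z : Type*} [Fintype X] [Fintype Y] {p : X × Y × Z → ℝ}

/-- The coupling `p(x,z) p(y,z) / p(z)` of the `(X,Z)`- and `(Y,Z)`-marginals of `p` that makes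
`X — Z — Y` a Markov chain; the unique informations are its conditional mutual informations. Where
`p(z) = 0` the division yields `0`, in agreement with the convention in `doOp`. -/
noncomputable def markovCoupling (p : X × Y × Z → ℝ) : X × Y × Z → ℝ :=
  fun t => margXZ p (t.1, t.2.2) * margYZ p t.2 / pZ p t.2.2

lemma markovCoupling_nonneg (hp : ∀ t, 0 ≤ p t) (t : X × Y × Z) : 0 ≤ markovCoupling p t :=
  div_nonneg (mul_nonneg (sum_nonneg fun _ _ => hp _) (margYZ_nonneg hp _)) (pZ_nonneg hp _)

lemma markovCoupling_swapXY (p : X × Y × Z → ℝ) :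
    markovCoupling (swapXY p) = swapXY (markovCoupling p) := by
  funext t
  simp only [markovCoupling, margXZ_swapXY, margYZ_swapXY, pZ_swapXY, swapXY, mul_comm]

lemma margYZ_markovCoupling (hp : ∀ t, 0 ≤ p t) : margYZ (markovCoupling p) = margYZ p := by
  funext ⟨y, z⟩
  calc ∑ x, margXZ p (x, z) * margYZ p (y, z) / pZ p z
      = pZ p z * margYZ p (y, z) / pZ p z := by
        rw [← sum_div, ← sum_mul]
        rfl
    _ = margYZ p (y, z) :=
        mul_div_cancel_left_of_imp fun hz => margYZ_eq_zero_of_pZ_eq_zero hp hz y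

lemma margXZ_markovCoupling (hp : ∀ t, 0 ≤ p t) : margXZ (markovCoupling p) = margXZ p := by
  rw [← margYZ_swapXY, ← markovCoupling_swapXY, margYZ_markovCoupling (swapXY_nonneg hp),
    margYZ_swapXY]

lemma margXZ_doOp (hp : ∀ t, 0 ≤ p t) (c : Z → ℝ) (t : X × Z) :
    margXZ (doOp p c) t = margXZ p t * c t.2 / pZ p t.2 := by
  obtain hz | hz := (pZ_nonneg hp t.2).eq_or_lt
  · simp [margXZ, doOp, ← hz]
  · simp only [margXZ, doOp, if_pos hz, sum_div, sum_mul]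

variable [Fintype Z]

lemma pY_markovCoupling (hp : ∀ t, 0 ≤ p t) : pY (markovCoupling p) = pY p := by
  funext y
  simp only [← sum_margYZ_eq_pY, margYZ_markovCoupling hp]

lemma margXZ_doy (hp : ∀ t, 0 ≤ p t) (y : Y) :
    margXZ (doy p y) = fun t => markovCoupling p (t.1, y, t.2) / pY p y := by
  funext t
  rw [doy, margXZ_doOp hp, cy, markovCoupling, margYZ]
  ring

theorem un_eq_condMI_markovCoupling (hp : ∀ t, 0 ≤ p t) : Un p = condMI (markovCoupling p) := by
  rw [condMI_eq_sum_pY_mul_mutInfo (markovCoupling_nonneg hp)]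
  simp only [Un, margXZ_doy hp, pY_markovCoupling hp]

theorem red_swapXY (hp : ∀ t, 0 ≤ p t) : Red (swapXY p) = Red p := by
  have h_chain := mutInfo_margYZ_add_condMI_comm (markovCoupling p)
  rw [margYZ_markovCoupling hp, margXZ_markovCoupling hp, ← markovCoupling_swapXY,
    ← un_eq_condMI_markovCoupling hp, ← un_eq_condMI_markovCoupling (swapXY_nonneg hp)] at h_chain
  rw [Red, Red, margXZ_swapXY]
  linarith

end MarkovCoupling

theorem stmt14_general {X Y Z : Type*} [Fintype X] [Fintype Y] [Fintype Z]
    (p : X × Y × Z → ℝ) (hp : ∀ t, 0 ≤ p t) :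
    Un p + UnYX p + Red p + Syn p =
      mutInfo (fun t : (X × Y) × Z => p (t.1.1, t.1.2, t.2)) := by
  calc Un p + UnYX p + Red p + Syn p
      = UnYX p + Red (swapXY p) + condMI p := by
        rw [red_swapXY hp, Syn]
        ring
    _ = mutInfo (margYZ p) + condMI p := by
        rw [Red, un_swapXY, margXZ_swapXY]
        ring
    _ = mutInfo (fun t : (X × Y) × Z => p (t.1.1, t.1.2, t.2)) :=
        (mutInfo_pair_eq_add_condMI p).symm

theorem stmt14 {X Y Z : Type*} [Fintype X] [Fintype Y] [Fintype Z]
    [Nonempty X] [Nonempty Y] [Nonempty Z]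
    (p : X × Y × Z → ℝ) (hp0 : ∀ t, 0 ≤ p t) (hp1 : ∑ t, p t = 1) :
    Un p + UnYX p + Red p + Syn p =
      mutInfo (fun t : (X × Y) × Z => p (t.1.1, t.1.2, t.2)) :=
  stmt14_general p hp0
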